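/- arXiv:2105.06126 — 3 statements merged into one kernel-verified Lean document; each statement's English description precedes it below -/
import Mathlib

section
/- (Existence of lacing values.) Let Z : Ω → ℝ^{d_z} be a measurable random variable on a probability space (Ω, P), let D_z ⊆ ℝ^{d_z} be a nonempty compact set with P {Z ∈ D_z} = 1, and let l, u : ℝ^{d_z} → ℝ be continuous functions with l(z) ≤ u(z) for all z ∈ D_z. Then for every risk level α ∈ (0,1) there exists a lacing value z ∈ D_z, i.e., a point z ∈ D_z satisfying l(z) ≤ VaR_α(l(Z)) and VaR_α(u(Z)) ≤ u(z). -/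
open MeasureTheory Set

/-- Value-at-risk of a real random variable `X` at level `α`. -/
noncomputable def VaR {Ω : Type*} [MeasurableSpace Ω] (P : Measure Ω)
    (X : Ω → ℝ) (α : ℝ) : ℝ :=
  sInf {w : ℝ | ENNReal.ofReal α ≤ P {ω | X ω ≤ w}}

/-- Existence of lacing values. -/
theorem stmt7 {Ω : Type*} [MeasurableSpace Ω] (P : Measure Ω)
    [IsProbabilityMeasure P] {dz : ℕ} (Z : Ω → (Fin dz → ℝ)) (hZ : Measurable Z)
    (Dz : Set (Fin dz → ℝ)) (hDz_ne : Dz.Nonempty) (hDz_cpt : IsCompact Dz)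
    (hDz_prob : P {ω | Z ω ∈ Dz} = 1)
    (l u : (Fin dz → ℝ) → ℝ) (hl : Continuous l) (hu : Continuous u)
    (hlu : ∀ z ∈ Dz, l z ≤ u z)
    (α : ℝ) (hα : α ∈ Set.Ioo (0 : ℝ) 1) :
    ∃ z ∈ Dz, l z ≤ VaR P (fun ω => l (Z ω)) α ∧
      VaR P (fun ω => u (Z ω)) α ≤ u z := by
  have hα0 : 0 < ENNReal.ofReal α := ENNReal.ofReal_pos.mpr hα.1
  have hα1 : ENNReal.ofReal α ≤ 1 := by
    rw [← ENNReal.ofReal_one]; exact ENNReal.ofReal_le_ofReal hα.2.le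
  have hDm : MeasurableSet {ω | Z ω ∈ Dz} := hZ hDz_cpt.isClosed.measurableSet
  have hae : ∀ᵐ ω ∂P, Z ω ∈ Dz := (prob_compl_eq_zero_iff hDm).mpr hDz_prob
  have hbdd : ∀ g : (Fin dz → ℝ) → ℝ, Continuous g →
      BddBelow {w : ℝ | ENNReal.ofReal α ≤ P {ω | g (Z ω) ≤ w}} := by
    intro g hg
    obtain ⟨z0, _, h0⟩ := hDz_cpt.exists_isMinOn hDz_ne hg.continuousOn
    refine ⟨g z0, fun w hw => ?_⟩
    by_contra hlt
    have hz : P {ω | g (Z ω) ≤ w} = 0 := by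
      rw [measure_eq_zero_iff_ae_notMem]
      filter_upwards [hae] with ω hω hc
      exact hlt ((h0 hω).trans hc)
    have hw' : ENNReal.ofReal α ≤ P {ω | g (Z ω) ≤ w} := hw
    rw [hz] at hw'
    exact absurd hα0 (not_lt.mpr hw')
  have hne : {w : ℝ | ENNReal.ofReal α ≤ P {ω | l (Z ω) ≤ w}}.Nonempty := by
    obtain ⟨z1, _, h1⟩ := hDz_cpt.exists_isMaxOn hDz_ne hl.continuousOn
    refine ⟨l z1, ?_⟩
    refine hα1.trans ?_
    rw [← hDz_prob]
    exact measure_mono fun ω hω => h1 hω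
  set a := VaR P (fun ω => l (Z ω)) α with ha
  have hatt : ENNReal.ofReal α ≤ P {ω | l (Z ω) ≤ a} := by
    have hset : {ω | l (Z ω) ≤ a} = ⋂ n : ℕ, {ω | l (Z ω) ≤ a + 1 / ((n : ℝ) + 1)} := by
      ext ω
      simp only [mem_setOf_eq, mem_iInter]
      constructor
      · intro h n
        have : (0 : ℝ) < 1 / ((n : ℝ) + 1) := by positivity
        linarith
      · intro h
        refine le_of_forall_pos_le_add fun ε hε => ?_
        obtain ⟨n, hn⟩ := exists_nat_one_div_lt hε
        linarith [h n]
    have hanti : Antitone fun n : ℕ => {ω | l (Z ω) ≤ a + 1 / ((n : ℝ) + 1)} := by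
      intro m n hmn ω hω
      have := Nat.one_div_le_one_div (α := ℝ) hmn
      simp only [mem_setOf_eq] at hω ⊢
      linarith
    rw [hset, hanti.measure_iInter
      (fun n => (measurableSet_le (hl.measurable.comp hZ) measurable_const).nullMeasurableSet)
      ⟨0, measure_ne_top _ _⟩]
    refine le_iInf fun n => ?_
    have hpos : (0 : ℝ) < 1 / ((n : ℝ) + 1) := by positivity
    obtain ⟨w, hw, hwlt⟩ := exists_lt_of_csInf_lt hne
      (show sInf _ < a + 1 / ((n : ℝ) + 1) from lt_add_of_pos_right a hpos)
    exact le_trans hw (measure_mono fun ω hω => le_trans hω hwlt.le)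
  have hK : IsCompact (Dz ∩ {z | l z ≤ a}) :=
    hDz_cpt.inter_right (isClosed_le hl continuous_const)
  have hKP : ENNReal.ofReal α ≤ P {ω | Z ω ∈ Dz ∩ {z | l z ≤ a}} := by
    refine hatt.trans (measure_mono_ae ?_)
    filter_upwards [hae] with ω hω h
    exact ⟨hω, h⟩
  have hKne : (Dz ∩ {z | l z ≤ a}).Nonempty := by
    obtain ⟨ω, hω⟩ := nonempty_of_measure_ne_zero (hα0.trans_le hKP).ne'
    exact ⟨Z ω, hω⟩
  obtain ⟨z, hz, hmax⟩ := hK.exists_isMaxOn hKne hu.continuousOn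
  refine ⟨z, hz.1, hz.2, csInf_le (hbdd u hu) ?_⟩
  exact hKP.trans (measure_mono fun ω hω => hmax hω)
end

section
/- Let W : Ω → ℝ^{d_w} be a measurable random variable on a probability space (Ω, P), let D ⊆ ℝ^{d_w} be a closed set with P {W ∈ D} = 1 such that every open set U ⊆ ℝ^{d_w} with U ∩ D nonempty satisfies P {W ∈ U} > 0 (i.e., D is the support of W), and let h : ℝ^{d_w} → ℝ be continuous. Suppose w_min ∈ D satisfies h(w_min) ≤ h(w) for all w ∈ D (h attains its minimum over D at w_min). Then VaR_α(h(W)) tends to h(w_min) as α → 0 from the right: the function α ↦ VaR_α(h(W)) tends to h(w_min) along the filter of neighborhoods of 0 within (0, ∞). -/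
open MeasureTheory Set Filter Topology

theorem stmt12 {Ω : Type*} [MeasurableSpace Ω] (P : Measure Ω)
    [IsProbabilityMeasure P] {dw : ℕ} (W : Ω → (Fin dw → ℝ)) (hW : Measurable W)
    (D : Set (Fin dw → ℝ)) (hD_closed : IsClosed D) (hD_prob : P {ω | W ω ∈ D} = 1)
    (hD_supp : ∀ U : Set (Fin dw → ℝ), IsOpen U → (U ∩ D).Nonempty →
      0 < P {ω | W ω ∈ U})
    (h : (Fin dw → ℝ) → ℝ) (hh : Continuous h)
    (wmin : Fin dw → ℝ) (hwmin : wmin ∈ D) (hmin : ∀ w ∈ D, h wmin ≤ h w) :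
    Filter.Tendsto (fun α => VaR P (fun ω => h (W ω)) α)
      (nhdsWithin 0 (Set.Ioi 0)) (nhds (h wmin)) := by
  have hnull : P {ω | W ω ∈ D}ᶜ = 0 := 
    (prob_compl_eq_zero_iff (hW hD_closed.measurableSet)).2 hD_prob
  have hlow : ∀ α : ℝ, 0 < α →
      ∀ w ∈ {w : ℝ | ENNReal.ofReal α ≤ P {ω | h (W ω) ≤ w}}, h wmin ≤ w := by
    intro α hα w hw
    by_contra hlt
    rw [not_le] at hlt
    have hsub : {ω | h (W ω) ≤ w} ⊆ {ω | W ω ∈ D}ᶜ := by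
      intro ω hω hωD
      have h1 := hmin _ hωD
      have h2 : h (W ω) ≤ w := hω
      linarith
    have h0 : P {ω | h (W ω) ≤ w} = 0 := measure_mono_null hsub hnull
    have hw' : ENNReal.ofReal α ≤ P {ω | h (W ω) ≤ w} := hw
    rw [h0] at hw'
    have := ENNReal.ofReal_pos.2 hα
    exact absurd hw' (not_le.2 this)
  rw [Metric.tendsto_nhds]
  intro ε hε
  have hp : 0 < P {ω | h (W ω) ≤ h wmin + ε / 2} := by
    refine lt_of_lt_of_le (hD_supp {w | h w < h wmin + ε / 2}
      (isOpen_lt hh continuous_const) ⟨wmin, ?_, hwmin⟩) (measure_mono ?_)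
    · show h wmin < h wmin + ε / 2
      linarith
    · intro ω hω
      have h3 : h (W ω) < h wmin + ε / 2 := hω
      exact h3.le
  have hp' : 0 < (P {ω | h (W ω) ≤ h wmin + ε / 2}).toReal :=
    ENNReal.toReal_pos hp.ne' (measure_ne_top _ _)
  filter_upwards [Ioo_mem_nhdsGT hp'] with α hα
  have hmem : h wmin + ε / 2 ∈ {w : ℝ | ENNReal.ofReal α ≤ P {ω | h (W ω) ≤ w}} :=
    ENNReal.ofReal_le_of_le_toReal hα.2.le
  have h1 : VaR P (fun ω => h (W ω)) α ≤ h wmin + ε / 2 :=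
    csInf_le ⟨h wmin, hlow α hα.1⟩ hmem
  have h2 : h wmin ≤ VaR P (fun ω => h (W ω)) α :=
    le_csInf ⟨_, hmem⟩ (hlow α hα.1)
  rw [Real.dist_eq, abs_lt]
  constructor <;> linarith
end

section
/- Let Z : Ω → ℝ^{d_z} be a measurable random variable on a probability space (Ω, P), let D_z ⊆ ℝ^{d_z} be a nonempty compact set with P {Z ∈ D_z} = 1 such that every open set U ⊆ ℝ^{d_z} with U ∩ D_z nonempty satisfies P {Z ∈ U} > 0 (i.e., D_z is the support of Z), and let f : ℝ^{d_x} × ℝ^{d_z} → ℝ be continuous. Then for every x ∈ ℝ^{d_x}, the value-at-risk of f(x, Z) converges, as the risk level α → 0 from the right, to the worst-case value min_{z ∈ D_z} f(x, z): the function α ↦ VaR_α(f(x, Z)) tends to sInf { f(x, z) | z ∈ D_z } along the filter of neighborhoods of 0 within (0, ∞). Consequently, adversarially robust optimization argmax_x min_{z ∈ D_z} f(x,z) coincides with argmax_x lim_{α→0⁺} VaR_α(f(x, Z)). -/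
open MeasureTheory Set Filter Topology

theorem stmt15 {Ω : Type*} [MeasurableSpace Ω] (P : Measure Ω)
    [IsProbabilityMeasure P] {dz dx : ℕ} (Z : Ω → (Fin dz → ℝ)) (hZ : Measurable Z)
    (Dz : Set (Fin dz → ℝ)) (hDz_ne : Dz.Nonempty) (hDz_cpt : IsCompact Dz)
    (hDz_prob : P {ω | Z ω ∈ Dz} = 1)
    (hDz_supp : ∀ U : Set (Fin dz → ℝ), IsOpen U → (U ∩ Dz).Nonempty →
      0 < P {ω | Z ω ∈ U})
    (f : (Fin dx → ℝ) → (Fin dz → ℝ) → ℝ) (hf : Continuous (fun p : (Fin dx → ℝ) × (Fin dz → ℝ) => f p.1 p.2)) :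
    ∀ x : Fin dx → ℝ,
      Filter.Tendsto (fun α => VaR P (fun ω => f x (Z ω)) α)
        (nhdsWithin 0 (Set.Ioi 0)) (nhds (sInf ((fun z => f x z) '' Dz))) := by
  intro x
  have hfx : Continuous (fun z => f x z) := hf.comp (by fun_prop : Continuous fun z => (x, z))
  obtain ⟨z0, hz0, hmin⟩ := hDz_cpt.exists_isMinOn hDz_ne hfx.continuousOn
  have hm : sInf ((fun z => f x z) '' Dz) = f x z0 := by
    have hl : IsLeast ((fun z => f x z) '' Dz) (f x z0) :=
      ⟨⟨z0, hz0, rfl⟩, by rintro _ ⟨z, hz, rfl⟩; exact hmin hz⟩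
    exact hl.csInf_eq
  rw [hm]
  have hlow : ∀ α : ℝ, 0 < α → ∀ w ∈ {w : ℝ | ENNReal.ofReal α ≤ P {ω | f x (Z ω) ≤ w}},
      f x z0 ≤ w := by
    intro α hα w hw
    by_contra! hlt
    have hc : P {ω | Z ω ∈ Dz}ᶜ = 0 :=
      (prob_compl_eq_zero_iff (hZ hDz_cpt.isClosed.measurableSet)).2 hDz_prob
    have h0 : P {ω | f x (Z ω) ≤ w} = 0 := by
      refine measure_mono_null ?_ hc
      intro ω hω hmem
      have h1 : f x z0 ≤ f x (Z ω) := hmin hmem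
      have h2 : f x (Z ω) ≤ w := hω
      linarith
    have hw' : ENNReal.ofReal α ≤ P {ω | f x (Z ω) ≤ w} := hw
    rw [h0] at hw'
    have := ENNReal.ofReal_pos.2 hα
    exact absurd hw' (not_le.2 this)
  rw [Metric.tendsto_nhds]
  intro ε hε
  have hpos := hDz_supp {z | f x z < f x z0 + ε / 2} (isOpen_lt hfx continuous_const)
    ⟨z0, by simp only [mem_ofPred_eq]; linarith, hz0⟩
  have htend : Tendsto ENNReal.ofReal (𝓝[>] 0) (𝓝 0) := by
    have := (ENNReal.continuous_ofReal.tendsto 0).mono_left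
      (nhdsWithin_le_nhds (s := Ioi (0:ℝ)))
    simpa using this
  filter_upwards [htend.eventually (gt_mem_nhds hpos), self_mem_nhdsWithin] with α h1 h2
  have hmem : f x z0 + ε / 2 ∈ {w : ℝ | ENNReal.ofReal α ≤ P {ω | f x (Z ω) ≤ w}} := by
    refine h1.le.trans (measure_mono ?_)
    intro ω hω
    have h3 : f x (Z ω) < f x z0 + ε / 2 := hω
    exact h3.le
  have ha : VaR P (fun ω => f x (Z ω)) α ≤ f x z0 + ε / 2 :=
    csInf_le ⟨f x z0, hlow α h2⟩ hmem
  have hb : f x z0 ≤ VaR P (fun ω => f x (Z ω)) α := le_csInf ⟨_, hmem⟩ (hlow α h2)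
  rw [Real.dist_eq, abs_lt]
  constructor <;> linarith
end
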